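/- Let k ≥ 1 and l ≥ 0 with k + 2l ≥ 3, and let Ω = {(x, w) ∈ (ℝ ∪ {∞})^k × H^l : the x-components are pairwise distinct and the w-components are pairwise distinct}, where ℝ ∪ {∞} ⊂ OnePoint ℂ is the boundary circle and H = {z ∈ ℂ : Im z > 0} is the open upper half-plane, with the subspace topology. Let SL(2,ℝ) act diagonally on Ω by the Möbius action. Then the map Φ : SL(2,ℝ) × Ω → Ω × Ω given by Φ(A, (x, w)) = (A•(x, w), (x, w)) is proper: the preimage under Φ of every compact subset of Ω × Ω is compact. -/

import Mathlib

open OnePoint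
open scoped Classical

/-- The Möbius action of `SL(2,ℂ)` on the Riemann sphere `OnePoint ℂ`. -/
noncomputable def mobius (A : Matrix.SpecialLinearGroup (Fin 2) ℂ) (z : OnePoint ℂ) :
    OnePoint ℂ :=
  match z with
  | Option.none =>
      if (A : Matrix (Fin 2) (Fin 2) ℂ) 1 0 = 0 then ∞
      else (((A : Matrix (Fin 2) (Fin 2) ℂ) 0 0 / (A : Matrix (Fin 2) (Fin 2) ℂ) 1 0 : ℂ) :
        OnePoint ℂ)
  | Option.some w =>
      if (A : Matrix (Fin 2) (Fin 2) ℂ) 1 0 * w + (A : Matrix (Fin 2) (Fin 2) ℂ) 1 1 = 0 then ∞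
      else ((((A : Matrix (Fin 2) (Fin 2) ℂ) 0 0 * w + (A : Matrix (Fin 2) (Fin 2) ℂ) 0 1) /
        ((A : Matrix (Fin 2) (Fin 2) ℂ) 1 0 * w + (A : Matrix (Fin 2) (Fin 2) ℂ) 1 1) : ℂ) :
        OnePoint ℂ)

/-- The embedding `SL(2,ℝ) → SL(2,ℂ)` induced by the inclusion `ℝ → ℂ`. -/
noncomputable def toC : Matrix.SpecialLinearGroup (Fin 2) ℝ →* Matrix.SpecialLinearGroup (Fin 2) ℂ :=
  Matrix.SpecialLinearGroup.map Complex.ofRealHom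

/-- `SL(2,ℝ)` carries its topology as a subset of the `2 × 2` real matrices. -/
instance : TopologicalSpace (Matrix.SpecialLinearGroup (Fin 2) ℝ) :=
  TopologicalSpace.induced (fun A => (A : Matrix (Fin 2) (Fin 2) ℝ)) inferInstance

/-- The boundary circle `ℝ ∪ {∞}` of the closed upper half-plane, inside the Riemann
sphere. -/
def boundaryCircle : Set (OnePoint ℂ) :=
  {z | z = ∞ ∨ ∃ r : ℝ, z = ((r : ℂ) : OnePoint ℂ)}

/-- The open upper half-plane `H = {z ∈ ℂ | Im z > 0}`, inside the Riemann sphere. -/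
def upperHalfPlane' : Set (OnePoint ℂ) :=
  {z | ∃ w : ℂ, 0 < w.im ∧ z = ((w : ℂ) : OnePoint ℂ)}

/-- The configuration space `Ω` of `k` pairwise distinct boundary marked points on
`ℝ ∪ {∞}` together with `l` pairwise distinct interior marked points in the open upper
half-plane. -/
def configSpace (k l : ℕ) : Set ((Fin k → OnePoint ℂ) × (Fin l → OnePoint ℂ)) :=
  {p | (∀ i, p.1 i ∈ boundaryCircle) ∧ Function.Injective p.1 ∧
       (∀ j, p.2 j ∈ upperHalfPlane') ∧ Function.Injective p.2}


/-- First coordinate of the embedding of the sphere. -/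
noncomputable def cX (z : OnePoint ℂ) : ℂ :=
  match z with
  | Option.none => 0
  | Option.some w => w / ((1 + Complex.normSq w : ℝ) : ℂ)

/-- Second coordinate of the embedding of the sphere. -/
noncomputable def cY (z : OnePoint ℂ) : ℝ :=
  match z with
  | Option.none => 0
  | Option.some w => 1 / (1 + Complex.normSq w)

lemma cX_infty : cX ∞ = 0 := rfl
lemma cY_infty : cY ∞ = 0 := rfl
lemma cX_coe (w : ℂ) : cX (w : OnePoint ℂ) = w / ((1 + Complex.normSq w : ℝ) : ℂ) := rfl
lemma cY_coe (w : ℂ) : cY (w : OnePoint ℂ) = 1 / (1 + Complex.normSq w) := rfl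

lemma one_add_normSq_pos (w : ℂ) : 0 < 1 + Complex.normSq w := by
  have := Complex.normSq_nonneg w
  linarith

lemma tendsto_normSq_aux :
    Filter.Tendsto (fun w : ℂ => ‖w‖⁻¹) (Filter.cocompact ℂ) (nhds 0) :=
  tendsto_inv_atTop_zero.comp (tendsto_norm_cocompact_atTop (E := ℂ))

lemma continuous_cX : Continuous cX := by
  rw [OnePoint.continuous_iff]
  constructor
  · rw [Filter.coclosedCompact_eq_cocompact, cX_infty]
    refine squeeze_zero_norm (fun w => ?_) tendsto_normSq_aux
    rw [cX_coe, norm_div, Complex.norm_real, Real.norm_of_nonneg (one_add_normSq_pos w).le,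
      Complex.normSq_eq_norm_sq]
    rcases eq_or_ne (‖w‖) 0 with h | h
    · simp [h]
    · have : 0 < ‖w‖ := lt_of_le_of_ne (norm_nonneg _) h.symm
      rw [div_le_iff₀ (by positivity), inv_mul_eq_div, le_div_iff₀ this]
      nlinarith
  · simp only [cX_coe]
    refine Continuous.div continuous_id ?_ ?_
    · exact Complex.continuous_ofReal.comp (continuous_const.add Complex.continuous_normSq)
    · intro w
      exact_mod_cast (one_add_normSq_pos w).ne'

lemma continuous_cY : Continuous cY := by
  rw [OnePoint.continuous_iff]
  constructor
  · rw [Filter.coclosedCompact_eq_cocompact, cY_infty]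
    have h1 : Filter.Tendsto (fun w : ℂ => 1 + ‖w‖ ^ 2) (Filter.cocompact ℂ) Filter.atTop :=
      Filter.tendsto_atTop_add_const_left _ _ ((Filter.tendsto_pow_atTop (by norm_num)).comp
        (tendsto_norm_cocompact_atTop (E := ℂ)))
    simpa [cY_coe, Complex.normSq_eq_norm_sq, Function.comp_def] using
      tendsto_inv_atTop_zero.comp h1
  · simp only [cY_coe]
    refine Continuous.div continuous_const ?_ ?_
    · exact (continuous_const.add Complex.continuous_normSq)
    · intro w
      exact (one_add_normSq_pos w).ne'

lemma sphere_ext {z w : OnePoint ℂ} (hX : cX z = cX w) (hY : cY z = cY w) : z = w := by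
  induction z using OnePoint.rec with
  | infty =>
    induction w using OnePoint.rec with
    | infty => rfl
    | coe w =>
      rw [cY_infty, cY_coe] at hY
      have := one_add_normSq_pos w
      exact absurd hY (by positivity)
  | coe z =>
    induction w using OnePoint.rec with
    | infty =>
      rw [cY_infty, cY_coe] at hY
      have := one_add_normSq_pos z
      exact absurd hY (by positivity)
    | coe w =>
      rw [cY_coe, cY_coe] at hY
      have h1 := one_add_normSq_pos z
      have h2 := one_add_normSq_pos w
      have h3 : 1 + Complex.normSq z = 1 + Complex.normSq w := by
        simpa using hY
      rw [cX_coe, cX_coe, h3] at hX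
      have h4 : ((1 + Complex.normSq w : ℝ) : ℂ) ≠ 0 := by exact_mod_cast h2.ne'
      rw [div_left_inj' h4] at hX
      rw [hX]

abbrev SLR := Matrix.SpecialLinearGroup (Fin 2) ℝ

lemma det_eq (A : SLR) : A.1 0 0 * A.1 1 1 - A.1 0 1 * A.1 1 0 = 1 := by
  have := A.2
  rwa [Matrix.det_fin_two] at this

/-- Denominator `|az+b|² + |cz+d|²`, normalised. -/
noncomputable def dN (A : SLR) (z : OnePoint ℂ) : ℝ :=
  (A.1 0 0 ^ 2 + A.1 1 0 ^ 2) * (1 - cY z) + (A.1 0 1 ^ 2 + A.1 1 1 ^ 2) * cY z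
    + 2 * (A.1 0 0 * A.1 0 1 + A.1 1 0 * A.1 1 1) * (cX z).re

noncomputable def nX (A : SLR) (z : OnePoint ℂ) : ℂ :=
  ((A.1 0 0 * A.1 1 0 * (1 - cY z) + A.1 0 1 * A.1 1 1 * cY z : ℝ) : ℂ)
    + ((A.1 0 0 * A.1 1 1 : ℝ) : ℂ) * cX z + ((A.1 0 1 * A.1 1 0 : ℝ) : ℂ) * (starRingEnd ℂ) (cX z)

noncomputable def nY (A : SLR) (z : OnePoint ℂ) : ℝ :=
  A.1 1 0 ^ 2 * (1 - cY z) + A.1 1 1 ^ 2 * cY z + 2 * (A.1 1 0 * A.1 1 1) * (cX z).re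

lemma mobius_infty (A : SLR) : mobius (toC A) ∞ =
    if ((A.1 1 0 : ℝ) : ℂ) = 0 then ∞ else (((A.1 0 0 : ℂ) / (A.1 1 0 : ℂ) : ℂ) : OnePoint ℂ) := rfl

lemma mobius_coe (A : SLR) (w : ℂ) : mobius (toC A) (w : OnePoint ℂ) =
    if (A.1 1 0 : ℂ) * w + (A.1 1 1 : ℂ) = 0 then ∞ else
      ((((A.1 0 0 : ℂ) * w + A.1 0 1) / ((A.1 1 0 : ℂ) * w + (A.1 1 1 : ℂ)) : ℂ) : OnePoint ℂ) := rfl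

/-- Coordinates of the point with homogeneous coordinates `(P : Q)`. -/
lemma coord_hom (P Q : ℂ) (h : 0 < Complex.normSq P + Complex.normSq Q) :
    cX (if Q = 0 then ∞ else ((P / Q : ℂ) : OnePoint ℂ)) =
      P * (starRingEnd ℂ) Q / ((Complex.normSq P + Complex.normSq Q : ℝ) : ℂ) ∧
    cY (if Q = 0 then ∞ else ((P / Q : ℂ) : OnePoint ℂ)) =
      Complex.normSq Q / (Complex.normSq P + Complex.normSq Q) := by
  by_cases hQ : Q = 0
  · simp [hQ, cX_infty, cY_infty]
  · have hq : 0 < Complex.normSq Q := Complex.normSq_pos.mpr hQ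
    have e : 1 + Complex.normSq (P / Q) =
        (Complex.normSq P + Complex.normSq Q) / Complex.normSq Q := by
      rw [Complex.normSq_div]; field_simp; ring
    rw [if_neg hQ, cX_coe, cY_coe, e]
    constructor
    · have h1 : ((Complex.normSq P + Complex.normSq Q : ℝ) : ℂ) ≠ 0 := by exact_mod_cast h.ne'
      have h2 : ((Complex.normSq Q : ℝ) : ℂ) ≠ 0 := by exact_mod_cast hq.ne'
      rw [Complex.ofReal_div]
      field_simp
      rw [← Complex.mul_conj]; ring
    · field_simp

lemma mobius_coord (A : SLR) (z : OnePoint ℂ) : 0 < dN A z ∧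
    cX (mobius (toC A) z) = nX A z / (dN A z : ℂ) ∧ cY (mobius (toC A) z) = nY A z / dN A z := by
  have hd := det_eq A
  induction z using OnePoint.rec with
  | infty =>
    have hpos : 0 < A.1 0 0 ^ 2 + A.1 1 0 ^ 2 := by
      by_contra hcon
      have h1 : A.1 0 0 = 0 := by nlinarith [sq_nonneg (A.1 0 0), sq_nonneg (A.1 1 0)]
      have h2 : A.1 1 0 = 0 := by nlinarith [sq_nonneg (A.1 0 0), sq_nonneg (A.1 1 0)]
      rw [h1, h2] at hd
      simp at hd
    have := coord_hom (A.1 0 0 : ℂ) (A.1 1 0 : ℂ) (by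
      simpa [Complex.normSq_ofReal, ← pow_two] using hpos)
    rw [mobius_infty, this.1, this.2]
    refine ⟨by simpa [dN, cX_infty, cY_infty] using hpos, ?_, ?_⟩
    · simp [dN, nX, cX_infty, cY_infty, Complex.normSq_ofReal, pow_two]
    · simp [dN, nY, cX_infty, cY_infty, Complex.normSq_ofReal, pow_two]
  | coe w =>
    set P : ℂ := (A.1 0 0 : ℂ) * w + A.1 0 1 with hP
    set Q : ℂ := (A.1 1 0 : ℂ) * w + A.1 1 1 with hQ
    have hs := one_add_normSq_pos w
    have hpos : 0 < Complex.normSq P + Complex.normSq Q := by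
      by_contra hcon
      have h1 : Complex.normSq P = 0 := by
        nlinarith [Complex.normSq_nonneg P, Complex.normSq_nonneg Q]
      have h2 : Complex.normSq Q = 0 := by
        nlinarith [Complex.normSq_nonneg P, Complex.normSq_nonneg Q]
      rw [Complex.normSq_eq_zero] at h1 h2
      have hd' : (A.1 0 0 : ℂ) * A.1 1 1 - A.1 0 1 * A.1 1 0 = 1 := by exact_mod_cast hd
      have e1 : (A.1 0 0 : ℂ) * Q - A.1 1 0 * P = 1 := by
        rw [← hd', hP, hQ]; ring
      rw [h1, h2] at e1
      simp at e1
    have eD : dN A (w : OnePoint ℂ) =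
        (Complex.normSq P + Complex.normSq Q) / (1 + Complex.normSq w) := by
      have hre : (w / ((1 + Complex.normSq w : ℝ) : ℂ)).re = w.re / (1 + Complex.normSq w) :=
        Complex.div_ofReal_re _ _
      rw [dN, cX_coe, cY_coe, hre]
      field_simp
      simp [hP, hQ, Complex.normSq_apply]
      ring
    have eY : nY A (w : OnePoint ℂ) = Complex.normSq Q / (1 + Complex.normSq w) := by
      have hre : (w / ((1 + Complex.normSq w : ℝ) : ℂ)).re = w.re / (1 + Complex.normSq w) :=
        Complex.div_ofReal_re _ _
      rw [nY, cX_coe, cY_coe, hre]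
      field_simp
      simp [hQ, Complex.normSq_apply]
      ring
    have hs' : ((1 + Complex.normSq w : ℝ) : ℂ) ≠ 0 := by exact_mod_cast hs.ne'
    have eX : nX A (w : OnePoint ℂ) =
        P * (starRingEnd ℂ) Q / ((1 + Complex.normSq w : ℝ) : ℂ) := by
      rw [nX, cX_coe, cY_coe, map_div₀, Complex.conj_ofReal, eq_div_iff hs', add_mul, add_mul,
        mul_assoc _ (w / _), mul_assoc _ (_ / _), div_mul_cancel₀ _ hs', div_mul_cancel₀ _ hs',
        ← Complex.ofReal_mul]
      have : (A.1 0 0 * A.1 1 0 * (1 - 1 / (1 + Complex.normSq w)) +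
          A.1 0 1 * A.1 1 1 * (1 / (1 + Complex.normSq w))) * (1 + Complex.normSq w) =
          A.1 0 0 * A.1 1 0 * Complex.normSq w + A.1 0 1 * A.1 1 1 := by
        field_simp; ring
      rw [this, hP, hQ]
      push_cast
      rw [← Complex.mul_conj]
      simp
      ring
    have := coord_hom P Q hpos
    rw [mobius_coe, this.1, this.2, eD, eY, eX]
    refine ⟨by positivity, ?_, ?_⟩
    · rw [Complex.ofReal_div, div_div_div_cancel_right₀ hs']
    · rw [div_div_div_cancel_right₀ hs.ne']

lemma continuous_entry (i j : Fin 2) : Continuous (fun A : SLR => A.1 i j) := by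
  have h : Continuous (fun A : SLR => (A : Matrix (Fin 2) (Fin 2) ℝ)) := continuous_induced_dom
  exact (continuous_apply j).comp ((continuous_apply i).comp h)

lemma isClosedEmbedding_sphere :
    Topology.IsClosedEmbedding (fun z : OnePoint ℂ => (cX z, cY z)) := by
  refine Continuous.isClosedEmbedding (continuous_cX.prodMk continuous_cY) ?_
  intro z w h
  exact sphere_ext (congrArg Prod.fst h) (congrArg Prod.snd h)

lemma continuous_mobius :
    Continuous (fun p : SLR × OnePoint ℂ => mobius (toC p.1) p.2) := by
  rw [isClosedEmbedding_sphere.isInducing.continuous_iff]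
  have e : ∀ i j : Fin 2, Continuous (fun p : SLR × OnePoint ℂ => p.1.1 i j) :=
    fun i j => (continuous_entry i j).comp continuous_fst
  have hX : Continuous (fun p : SLR × OnePoint ℂ => cX p.2) := continuous_cX.comp continuous_snd
  have hY : Continuous (fun p : SLR × OnePoint ℂ => cY p.2) := continuous_cY.comp continuous_snd
  have a := e 0 0
  have b := e 0 1
  have c := e 1 0
  have d := e 1 1
  have hXr : Continuous (fun p : SLR × OnePoint ℂ => (cX p.2).re) := Complex.continuous_re.comp hX
  have hXc : Continuous (fun p : SLR × OnePoint ℂ => (starRingEnd ℂ) (cX p.2)) :=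
    Complex.continuous_conj.comp hX
  have hD : Continuous (fun p : SLR × OnePoint ℂ => dN p.1 p.2) := by
    unfold dN; fun_prop
  have hnY : Continuous (fun p : SLR × OnePoint ℂ => nY p.1 p.2) := by
    unfold nY; fun_prop
  have hnX : Continuous (fun p : SLR × OnePoint ℂ => nX p.1 p.2) := by
    unfold nX
    refine ((Complex.continuous_ofReal.comp ?_).add
      ((Complex.continuous_ofReal.comp ?_).mul hX)).add
      ((Complex.continuous_ofReal.comp ?_).mul hXc) <;> fun_prop
  refine Continuous.prodMk ?_ ?_
  · have : (fun p : SLR × OnePoint ℂ => cX (mobius (toC p.1) p.2)) =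
        fun p => nX p.1 p.2 / (dN p.1 p.2 : ℂ) := funext fun p => (mobius_coord p.1 p.2).2.1
    rw [this]
    refine hnX.div (Complex.continuous_ofReal.comp hD) fun p => ?_
    exact_mod_cast (mobius_coord p.1 p.2).1.ne'
  · have : (fun p : SLR × OnePoint ℂ => cY (mobius (toC p.1) p.2)) =
        fun p => nY p.1 p.2 / dN p.1 p.2 := funext fun p => (mobius_coord p.1 p.2).2.2
    rw [this]
    exact hnY.div hD fun p => (mobius_coord p.1 p.2).1.ne'

lemma isCompact_bounded (C : ℝ) : IsCompact {A : SLR | ∀ i j, A.1 i j ^ 2 ≤ C} := by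
  have hind : Topology.IsInducing (fun A : SLR => (A : Matrix (Fin 2) (Fin 2) ℝ)) := ⟨rfl⟩
  have hr : Set.range (fun A : SLR => (A : Matrix (Fin 2) (Fin 2) ℝ)) =
      {M : Matrix (Fin 2) (Fin 2) ℝ | M.det = 1} := by
    ext M
    constructor
    · rintro ⟨A, rfl⟩; exact A.2
    · intro h; exact ⟨⟨M, h⟩, rfl⟩
  have hcl : IsClosed (Set.range (fun A : SLR => (A : Matrix (Fin 2) (Fin 2) ℝ))) := by
    rw [hr]
    exact isClosed_eq (Continuous.matrix_det continuous_id) continuous_const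
  have hemb : Topology.IsClosedEmbedding (fun A : SLR => (A : Matrix (Fin 2) (Fin 2) ℝ)) :=
    ⟨⟨hind, Subtype.val_injective⟩, hcl⟩
  have hK : IsCompact (Set.univ.pi fun _ : Fin 2 => Set.univ.pi fun _ : Fin 2 =>
      Set.Icc (-√C) (√C)) :=
    isCompact_univ_pi fun _ => isCompact_univ_pi fun _ => isCompact_Icc
  have hcl2 : IsClosed {A : SLR | ∀ i j, A.1 i j ^ 2 ≤ C} := by
    simp only [Set.ofPred_forall]
    exact isClosed_iInter fun i => isClosed_iInter fun j =>
      isClosed_le ((continuous_entry i j).pow 2) continuous_const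
  refine IsCompact.of_isClosed_subset (hemb.isCompact_preimage hK) hcl2 ?_
  intro A hA
  intro i _ j _
  exact abs_le.mp (Real.abs_le_sqrt (hA i j))

/-- Squared chordal separation of boundary points. -/
noncomputable def sep (z w : OnePoint ℂ) : ℝ :=
  (1 - cY z) * cY w - 2 * (cX z).re * (cX w).re + (1 - cY w) * cY z

lemma continuous_sep : Continuous (fun p : OnePoint ℂ × OnePoint ℂ => sep p.1 p.2) := by
  have hX := continuous_cX
  have hY := continuous_cY
  unfold sep
  have h1 : Continuous (fun p : OnePoint ℂ × OnePoint ℂ => (cX p.1).re) :=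
    Complex.continuous_re.comp (hX.comp continuous_fst)
  have h2 : Continuous (fun p : OnePoint ℂ × OnePoint ℂ => (cX p.2).re) :=
    Complex.continuous_re.comp (hX.comp continuous_snd)
  fun_prop

/-- `(p,q)` is a unit vector representing the boundary point `z`. -/
def BRep (z : OnePoint ℂ) (p q : ℝ) : Prop :=
  p ^ 2 + q ^ 2 = 1 ∧ cX z = ((p * q : ℝ) : ℂ) ∧ cY z = q ^ 2

lemma exists_rep {z : OnePoint ℂ} (hz : z ∈ boundaryCircle) : ∃ p q, BRep z p q := by
  rcases hz with rfl | ⟨r, rfl⟩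
  · exact ⟨1, 0, by norm_num, by simp [cX_infty], by simp [cY_infty]⟩
  · have hs : 0 < 1 + r ^ 2 := by positivity
    have hq : √(1 + r ^ 2) ^ 2 = 1 + r ^ 2 := Real.sq_sqrt hs.le
    have hq0 : √(1 + r ^ 2) ≠ 0 := (Real.sqrt_pos.mpr hs).ne'
    refine ⟨r / √(1 + r ^ 2), 1 / √(1 + r ^ 2), ?_, ?_, ?_⟩
    · field_simp; rw [hq]; ring
    · rw [cX_coe, ← Complex.ofReal_div]
      congr 1
      rw [Complex.normSq_ofReal, div_mul_div_comm, ← pow_two, ← pow_two, hq, mul_one]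
    · rw [cY_coe, Complex.normSq_ofReal, div_pow, hq, ← pow_two, one_pow]

lemma sep_rep {z w : OnePoint ℂ} {p q p' q' : ℝ} (h : BRep z p q) (h' : BRep w p' q') :
    sep z w = (p * q' - p' * q) ^ 2 := by
  obtain ⟨h1, h2, h3⟩ := h
  obtain ⟨h1', h2', h3'⟩ := h'
  rw [sep, h2, h3, h2', h3', Complex.ofReal_re, Complex.ofReal_re]
  linear_combination (-q' ^ 2) * h1 + (-q ^ 2) * h1'

lemma sep_pos {z w : OnePoint ℂ} (hz : z ∈ boundaryCircle) (hw : w ∈ boundaryCircle)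
    (hne : z ≠ w) : 0 < sep z w := by
  obtain ⟨p, q, h⟩ := exists_rep hz
  obtain ⟨p', q', h'⟩ := exists_rep hw
  rw [sep_rep h h']
  refine lt_of_le_of_ne (sq_nonneg _) fun h0 => hne ?_
  have hD : p * q' - p' * q = 0 := by
    exact pow_eq_zero_iff (two_ne_zero) |>.mp h0.symm
  obtain ⟨h1, h2, h3⟩ := h
  obtain ⟨h1', h2', h3'⟩ := h'
  refine sphere_ext ?_ ?_
  · rw [h2, h2']
    congr 1
    linear_combination (-p * q) * h1' + (p' * q') * h1 + (q * q' - p * p') * hD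
  · rw [h3, h3']
    linear_combination (-q ^ 2) * h1' + (q' ^ 2) * h1 - (p * q' + p' * q) * hD

lemma rep_mobius (A : SLR) {z : OnePoint ℂ} {p q : ℝ} (h : BRep z p q) :
    ∃ t p' q' : ℝ, BRep (mobius (toC A) z) p' q' ∧
      A.1 0 0 * p + A.1 0 1 * q = t * p' ∧ A.1 1 0 * p + A.1 1 1 * q = t * q' := by
  obtain ⟨h1, h2, h3⟩ := h
  obtain ⟨hd, hX, hY⟩ := mobius_coord A z
  set P := A.1 0 0 * p + A.1 0 1 * q with hP
  set Q := A.1 1 0 * p + A.1 1 1 * q with hQ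
  have hp : 1 - q ^ 2 = p ^ 2 := by linarith
  have eD : dN A z = P ^ 2 + Q ^ 2 := by
    rw [dN, h2, h3, Complex.ofReal_re, hp, hP, hQ]; ring
  have eY : nY A z = Q ^ 2 := by
    rw [nY, h2, h3, Complex.ofReal_re, hp, hQ]; ring
  have eX : nX A z = ((P * Q : ℝ) : ℂ) := by
    rw [nX, h2, h3, Complex.conj_ofReal, hp, hP, hQ]; push_cast; ring
  rw [eD] at hd
  have hq : √(P ^ 2 + Q ^ 2) ^ 2 = P ^ 2 + Q ^ 2 := Real.sq_sqrt hd.le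
  have hq0 : √(P ^ 2 + Q ^ 2) ≠ 0 := (Real.sqrt_pos.mpr hd).ne'
  refine ⟨√(P ^ 2 + Q ^ 2), P / √(P ^ 2 + Q ^ 2), Q / √(P ^ 2 + Q ^ 2), ⟨?_, ?_, ?_⟩, ?_, ?_⟩
  · rw [div_pow, div_pow, hq, ← add_div, div_self hd.ne']
  · rw [hX, eX, eD, ← Complex.ofReal_div, div_mul_div_comm, ← pow_two, hq]
  · rw [hY, eY, eD, div_pow, hq]
  · field_simp
  · field_simp

lemma unit_det_le {p q p' q' : ℝ} (h : p ^ 2 + q ^ 2 = 1) (h' : p' ^ 2 + q' ^ 2 = 1) :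
    (p * q' - p' * q) ^ 2 ≤ 1 := by
  have : (p * q' - p' * q) ^ 2 + (p * p' + q * q') ^ 2 = 1 := by
    linear_combination (p' ^ 2 + q' ^ 2) * h + h'
  nlinarith [sq_nonneg (p * p' + q * q')]

lemma scale_bound {x y z ε : ℝ} (hε : 0 < ε) (hx : 0 ≤ x)
    (hxy : x * y * ε ≤ 1) (hxz : x * z * ε ≤ 1) (hyz : ε ≤ y * z) (hy : 0 ≤ y) (hz : 0 ≤ z) :
    x ≤ 1 + 1 / ε ^ 3 := by
  have h1 : (x * y * ε) * (x * z * ε) ≤ 1 := by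
    have : 0 ≤ x * z * ε := by positivity
    nlinarith
  have h2 : x ^ 2 * ε ^ 3 ≤ 1 := by
    calc x ^ 2 * ε ^ 3 = x ^ 2 * ε ^ 2 * ε := by ring
      _ ≤ x ^ 2 * ε ^ 2 * (y * z) := by gcongr
      _ = (x * y * ε) * (x * z * ε) := by ring
      _ ≤ 1 := h1
  have h3 : x ^ 2 ≤ 1 / ε ^ 3 := by rw [le_div_iff₀ (by positivity)]; exact h2
  nlinarith [sq_nonneg (x - 1)]

lemma entry_bound {a b p q p' q' s t r r' ε M : ℝ} (hε : 0 < ε)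
    (hD : ε ≤ (p * q' - p' * q) ^ 2) (h : p ^ 2 + q ^ 2 = 1) (h' : p' ^ 2 + q' ^ 2 = 1)
    (hr : r ^ 2 ≤ 1) (hr' : r' ^ 2 ≤ 1) (e1 : a * p + b * q = s * r) (e2 : a * p' + b * q' = t * r')
    (hs : s ^ 2 ≤ M) (ht : t ^ 2 ≤ M) : a ^ 2 ≤ 4 * M / ε ∧ b ^ 2 ≤ 4 * M / ε := by
  have hM : 0 ≤ M := le_trans (sq_nonneg _) hs
  have hsr : (s * r) ^ 2 ≤ M := by rw [mul_pow]; nlinarith [sq_nonneg s]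
  have htr : (t * r') ^ 2 ≤ M := by rw [mul_pow]; nlinarith [sq_nonneg t]
  have key : ∀ x y : ℝ, x ^ 2 ≤ 1 → y ^ 2 ≤ 1 → (s * r * x - t * r' * y) ^ 2 ≤ 4 * M := by
    intro x y hx hy
    have h1 : (s * r * x) ^ 2 ≤ M := by rw [mul_pow]; nlinarith [sq_nonneg (s * r)]
    have h2 : (t * r' * y) ^ 2 ≤ M := by rw [mul_pow]; nlinarith [sq_nonneg (t * r')]
    nlinarith [sq_nonneg (s * r * x + t * r' * y)]
  constructor
  · rw [le_div_iff₀ hε]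
    have e : a * (p * q' - p' * q) = s * r * q' - t * r' * q := by rw [← e1, ← e2]; ring
    have := key q' q (by nlinarith [sq_nonneg p']) (by nlinarith [sq_nonneg p])
    rw [← e, mul_pow] at this
    nlinarith [sq_nonneg a]
  · rw [le_div_iff₀ hε]
    have e : b * (p * q' - p' * q) = t * r' * p - s * r * p' := by rw [← e1, ← e2]; ring
    have := key p' p (by nlinarith [sq_nonneg q']) (by nlinarith [sq_nonneg q])
    rw [← neg_sq, neg_sub, ← e, mul_pow] at this
    nlinarith [sq_nonneg b]

/-- Boundedness from three separated boundary points. -/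
lemma bound_boundary {ε : ℝ} (hε : 0 < ε) (A : SLR) {z₁ z₂ z₃ : OnePoint ℂ}
    (m₁ : z₁ ∈ boundaryCircle) (m₂ : z₂ ∈ boundaryCircle) (m₃ : z₃ ∈ boundaryCircle)
    (s₁₂ : ε ≤ sep z₁ z₂) (s₁₃ : ε ≤ sep z₁ z₃) (s₂₃ : ε ≤ sep z₂ z₃)
    (t₁₂ : ε ≤ sep (mobius (toC A) z₁) (mobius (toC A) z₂))
    (t₁₃ : ε ≤ sep (mobius (toC A) z₁) (mobius (toC A) z₃))
    (t₂₃ : ε ≤ sep (mobius (toC A) z₂) (mobius (toC A) z₃)) :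
    ∀ i j, A.1 i j ^ 2 ≤ 4 * (1 + 1 / ε ^ 3) / ε := by
  obtain ⟨p₁, q₁, r₁⟩ := exists_rep m₁
  obtain ⟨p₂, q₂, r₂⟩ := exists_rep m₂
  obtain ⟨p₃, q₃, r₃⟩ := exists_rep m₃
  obtain ⟨l₁, u₁, v₁, R₁, e₁, f₁⟩ := rep_mobius A r₁
  obtain ⟨l₂, u₂, v₂, R₂, e₂, f₂⟩ := rep_mobius A r₂
  obtain ⟨l₃, u₃, v₃, R₃, e₃, f₃⟩ := rep_mobius A r₃
  rw [sep_rep r₁ r₂] at s₁₂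
  rw [sep_rep r₁ r₃] at s₁₃
  rw [sep_rep r₂ r₃] at s₂₃
  rw [sep_rep R₁ R₂] at t₁₂
  rw [sep_rep R₁ R₃] at t₁₃
  rw [sep_rep R₂ R₃] at t₂₃
  have hd := det_eq A
  have gen : ∀ {p q p' q' u v u' v' l l' : ℝ}, p ^ 2 + q ^ 2 = 1 → p' ^ 2 + q' ^ 2 = 1 →
      u ^ 2 + v ^ 2 = 1 → u' ^ 2 + v' ^ 2 = 1 →
      A.1 0 0 * p + A.1 0 1 * q = l * u → A.1 1 0 * p + A.1 1 1 * q = l * v →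
      A.1 0 0 * p' + A.1 0 1 * q' = l' * u' → A.1 1 0 * p' + A.1 1 1 * q' = l' * v' →
      ε ≤ (p * q' - p' * q) ^ 2 → ε ≤ (u * v' - u' * v) ^ 2 →
      l ^ 2 * l' ^ 2 * ε ≤ 1 ∧ ε ≤ l ^ 2 * l' ^ 2 := by
    intro p q p' q' u v u' v' l l' h1 h2 h3 h4 e f e' f' hs ht
    have hE : p * q' - p' * q = l * l' * (u * v' - u' * v) := by
      have : (A.1 0 0 * p + A.1 0 1 * q) * (A.1 1 0 * p' + A.1 1 1 * q') -
          (A.1 0 0 * p' + A.1 0 1 * q') * (A.1 1 0 * p + A.1 1 1 * q) = p * q' - p' * q := by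
        linear_combination (p * q' - p' * q) * hd
      rw [← this, e, f, e', f']; ring
    have hE2 : (p * q' - p' * q) ^ 2 = l ^ 2 * l' ^ 2 * (u * v' - u' * v) ^ 2 := by
      rw [hE]; ring
    have b1 := unit_det_le h1 h2
    have b2 := unit_det_le h3 h4
    have hl : 0 ≤ l ^ 2 * l' ^ 2 := by positivity
    constructor
    · calc l ^ 2 * l' ^ 2 * ε ≤ l ^ 2 * l' ^ 2 * (u * v' - u' * v) ^ 2 :=
          mul_le_mul_of_nonneg_left ht hl
        _ ≤ 1 := hE2 ▸ b1
    · calc ε ≤ l ^ 2 * l' ^ 2 * (u * v' - u' * v) ^ 2 := hE2 ▸ hs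
        _ ≤ l ^ 2 * l' ^ 2 * 1 := mul_le_mul_of_nonneg_left b2 hl
        _ = l ^ 2 * l' ^ 2 := mul_one _
  have g₁₂ := gen r₁.1 r₂.1 R₁.1 R₂.1 e₁ f₁ e₂ f₂ s₁₂ t₁₂
  have g₁₃ := gen r₁.1 r₃.1 R₁.1 R₃.1 e₁ f₁ e₃ f₃ s₁₃ t₁₃
  have g₂₃ := gen r₂.1 r₃.1 R₂.1 R₃.1 e₂ f₂ e₃ f₃ s₂₃ t₂₃
  have L₁ := scale_bound hε (sq_nonneg l₁) g₁₂.1 g₁₃.1 g₂₃.2 (sq_nonneg _) (sq_nonneg _)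
  have L₂ := scale_bound hε (sq_nonneg l₂) (by rw [mul_comm (l₂ ^ 2)]; exact g₁₂.1) g₂₃.1 g₁₃.2
    (sq_nonneg _) (sq_nonneg _)
  have hu₁ : u₁ ^ 2 ≤ 1 := by linarith [R₁.1, sq_nonneg v₁]
  have hv₁ : v₁ ^ 2 ≤ 1 := by linarith [R₁.1, sq_nonneg u₁]
  have hu₂ : u₂ ^ 2 ≤ 1 := by linarith [R₂.1, sq_nonneg v₂]
  have hv₂ : v₂ ^ 2 ≤ 1 := by linarith [R₂.1, sq_nonneg u₂]
  have E := entry_bound hε s₁₂ r₁.1 r₂.1 hu₁ hu₂ e₁ e₂ L₁ L₂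
  have F := entry_bound hε s₁₂ r₁.1 r₂.1 hv₁ hv₂ f₁ f₂ L₁ L₂
  intro i j
  fin_cases i <;> fin_cases j
  · exact E.1
  · exact E.2
  · exact F.1
  · exact F.2

lemma row_bound {c d ε R T : ℝ} {w : ℂ} (hε : 0 < ε) (hw : ε ≤ w.im) (hR : ‖w‖ ^ 2 ≤ R)
    (hT : Complex.normSq ((c : ℂ) * w + d) ≤ T) :
    c ^ 2 ≤ T / ε ^ 2 + (2 * T + 2 * (R * (T / ε ^ 2))) ∧
    d ^ 2 ≤ T / ε ^ 2 + (2 * T + 2 * (R * (T / ε ^ 2))) := by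
  have hT0 : 0 ≤ T := le_trans (Complex.normSq_nonneg _) hT
  have hR0 : 0 ≤ R := le_trans (sq_nonneg _) hR
  have hexp : Complex.normSq ((c : ℂ) * w + d) = (c * w.re + d) ^ 2 + (c * w.im) ^ 2 := by
    simp [Complex.normSq_apply]; ring
  rw [hexp] at hT
  have hn : w.re ^ 2 ≤ R := by
    rw [← Complex.normSq_eq_norm_sq, Complex.normSq_apply] at hR
    nlinarith [sq_nonneg w.im]
  have hc : c ^ 2 ≤ T / ε ^ 2 := by
    rw [le_div_iff₀ (by positivity)]
    have : ε ^ 2 ≤ w.im ^ 2 := by gcongr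
    calc c ^ 2 * ε ^ 2 ≤ c ^ 2 * w.im ^ 2 := by gcongr
      _ ≤ T := by nlinarith [sq_nonneg (c * w.re + d)]
  have h1 : (c * w.re) ^ 2 ≤ R * (T / ε ^ 2) := by
    rw [mul_pow, mul_comm]; gcongr
  have h2 : (c * w.re + d) ^ 2 ≤ T := by nlinarith [sq_nonneg (c * w.im)]
  have hp : 0 ≤ T / ε ^ 2 := by positivity
  have hp2 : 0 ≤ R * (T / ε ^ 2) := by positivity
  constructor
  · linarith
  · nlinarith [sq_nonneg (2 * (c * w.re) + d)]

/-- Boundedness from an interior point. -/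
lemma bound_interior {ε R : ℝ} (hε : 0 < ε) : ∃ C : ℝ, ∀ (A : SLR) (w w' : ℂ),
    ε ≤ w.im → ‖w‖ ^ 2 ≤ R → ε ≤ w'.im → ‖w'‖ ^ 2 ≤ R →
    mobius (toC A) (w : OnePoint ℂ) = (w' : OnePoint ℂ) → ∀ i j, A.1 i j ^ 2 ≤ C := by
  set T := (1 + R) / ε with hT
  set T' := R * T with hT'
  refine ⟨max (T / ε ^ 2 + (2 * T + 2 * (R * (T / ε ^ 2))))
    (T' / ε ^ 2 + (2 * T' + 2 * (R * (T' / ε ^ 2)))), ?_⟩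
  intro A w w' hw hR hw' hR' h
  have hd := det_eq A
  rw [mobius_coe] at h
  split_ifs at h with hQ
  · exact absurd h (OnePoint.infty_ne_coe _)
  rw [OnePoint.coe_eq_coe] at h
  have hQp := Complex.normSq_pos.mpr hQ
  have him : w'.im * Complex.normSq ((A.1 1 0 : ℂ) * w + A.1 1 1) = w.im := by
    rw [← h, Complex.div_im, ← sub_div, div_mul_cancel₀ _ hQp.ne']
    simp
    linear_combination w.im * hd
  have hwim : w.im ≤ 1 + R := by
    have : w.im ^ 2 ≤ ‖w‖ ^ 2 := by
      rw [← Complex.normSq_eq_norm_sq, Complex.normSq_apply]; nlinarith [sq_nonneg w.re]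
    nlinarith [sq_nonneg (w.im - 1)]
  have hT1 : Complex.normSq ((A.1 1 0 : ℂ) * w + A.1 1 1) ≤ T := by
    rw [hT, le_div_iff₀ hε]
    nlinarith
  have hT2 : Complex.normSq ((A.1 0 0 : ℂ) * w + A.1 0 1) ≤ T' := by
    have : (A.1 0 0 : ℂ) * w + A.1 0 1 = w' * ((A.1 1 0 : ℂ) * w + A.1 1 1) := by
      rw [← h, div_mul_cancel₀ _ hQ]
    rw [this, Complex.normSq_mul, hT', Complex.normSq_eq_norm_sq w']
    have : 0 ≤ R := le_trans (sq_nonneg _) hR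
    gcongr
  have E := row_bound hε hw hR hT2
  have F := row_bound hε hw hR hT1
  intro i j
  fin_cases i <;> fin_cases j
  · exact le_max_of_le_right E.1
  · exact le_max_of_le_right E.2
  · exact le_max_of_le_left F.1
  · exact le_max_of_le_left F.2

abbrev Amb (k l : ℕ) := (Fin k → OnePoint ℂ) × (Fin l → OnePoint ℂ)

lemma exists_pos_le {α : Type*} [TopologicalSpace α] {K : Set α} (hK : IsCompact K) {f : α → ℝ}
    (hf : ContinuousOn f K) (hpos : ∀ x ∈ K, 0 < f x) : ∃ ε > 0, ∀ x ∈ K, ε ≤ f x := by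
  rcases K.eq_empty_or_nonempty with rfl | hne
  · exact ⟨1, one_pos, by simp⟩
  · obtain ⟨x, hx, hm⟩ := hK.exists_isMinOn hne hf
    exact ⟨f x, hpos x hx, fun y hy => hm hy⟩

lemma exists_bound (k l : ℕ) (hk : 1 ≤ k) (hkl : 3 ≤ k + 2 * l) (L : Set (Amb k l))
    (hL : IsCompact L) (hsub : L ⊆ configSpace k l) :
    ∃ C : ℝ, ∀ (A : SLR) (x : Amb k l), x ∈ L →
      ((fun i => mobius (toC A) (x.1 i), fun j => mobius (toC A) (x.2 j)) : Amb k l) ∈ L →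
      ∀ i j, A.1 i j ^ 2 ≤ C := by
  rcases Nat.eq_zero_or_pos l with hl | hl
  · have h3 : 3 ≤ k := by omega
    have hs : ∀ i j : Fin k, i ≠ j → ∃ ε > 0, ∀ x ∈ L, ε ≤ sep (x.1 i) (x.1 j) := by
      intro i j hij
      refine exists_pos_le hL (Continuous.continuousOn ?_) ?_
      · have h1 : Continuous (fun x : Amb k l => (x.1 i, x.1 j)) := by fun_prop
        exact continuous_sep.comp h1
      · intro x hx
        have := hsub hx
        exact sep_pos (this.1 i) (this.1 j) (this.2.1.ne hij)
    let i₁ : Fin k := ⟨0, by omega⟩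
    let i₂ : Fin k := ⟨1, by omega⟩
    let i₃ : Fin k := ⟨2, by omega⟩
    obtain ⟨ε₁, p₁, h₁⟩ := hs i₁ i₂ (by simp [i₁, i₂])
    obtain ⟨ε₂, p₂, h₂⟩ := hs i₁ i₃ (by simp [i₁, i₃])
    obtain ⟨ε₃, p₃, h₃⟩ := hs i₂ i₃ (by simp [i₂, i₃])
    have hε : 0 < min ε₁ (min ε₂ ε₃) := lt_min p₁ (lt_min p₂ p₃)
    have m₁ : min ε₁ (min ε₂ ε₃) ≤ ε₁ := min_le_left _ _
    have m₂ : min ε₁ (min ε₂ ε₃) ≤ ε₂ := (min_le_right _ _).trans (min_le_left _ _)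
    have m₃ : min ε₁ (min ε₂ ε₃) ≤ ε₃ := (min_le_right _ _).trans (min_le_right _ _)
    refine ⟨4 * (1 + 1 / (min ε₁ (min ε₂ ε₃)) ^ 3) / min ε₁ (min ε₂ ε₃), fun A x hx hAx => ?_⟩
    have hc := (hsub hx).1
    exact bound_boundary hε A (hc i₁) (hc i₂) (hc i₃)
      (m₁.trans (h₁ x hx)) (m₂.trans (h₂ x hx)) (m₃.trans (h₃ x hx))
      (m₁.trans (h₁ _ hAx)) (m₂.trans (h₂ _ hAx)) (m₃.trans (h₃ _ hAx))
  · let j₀ : Fin l := ⟨0, hl⟩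
    have hS' : IsCompact ((fun x : Amb k l => x.2 j₀) '' L) :=
      hL.image ((continuous_apply j₀).comp continuous_snd)
    have hS : IsCompact ((fun w : ℂ => (w : OnePoint ℂ)) ⁻¹' ((fun x : Amb k l => x.2 j₀) '' L)) := by
      refine OnePoint.isOpenEmbedding_coe.isInducing.isCompact_preimage' hS' ?_
      rintro _ ⟨x, hx, rfl⟩
      obtain ⟨w, _, hw⟩ := (hsub hx).2.2.1 j₀
      exact ⟨w, hw.symm⟩
    obtain ⟨ε, hε, hm⟩ := exists_pos_le hS Complex.continuous_im.continuousOn (by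
      rintro w ⟨x, hx, hxw⟩
      obtain ⟨w', hw', he⟩ := (hsub hx).2.2.1 j₀
      simp only at hxw
      rw [he, OnePoint.coe_eq_coe] at hxw
      rwa [← hxw])
    obtain ⟨R, hR⟩ := hS.exists_bound_of_continuousOn
      (f := fun w : ℂ => ‖w‖ ^ 2) (by fun_prop)
    have hR' : ∀ w ∈ (fun w : ℂ => (w : OnePoint ℂ)) ⁻¹' ((fun x : Amb k l => x.2 j₀) '' L),
        ‖w‖ ^ 2 ≤ R := fun w hw => (le_abs_self _).trans (hR w hw)
    obtain ⟨C, hC⟩ := bound_interior (R := R) hε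
    refine ⟨C, fun A x hx hAx => ?_⟩
    obtain ⟨w, _, hw⟩ := (hsub hx).2.2.1 j₀
    obtain ⟨w', _, hw'⟩ := (hsub hAx).2.2.1 j₀
    have mw : w ∈ (fun w : ℂ => (w : OnePoint ℂ)) ⁻¹' ((fun x : Amb k l => x.2 j₀) '' L) :=
      ⟨x, hx, hw⟩
    have mw' : w' ∈ (fun w : ℂ => (w : OnePoint ℂ)) ⁻¹' ((fun x : Amb k l => x.2 j₀) '' L) :=
      ⟨_, hAx, hw'⟩
    refine hC A w w' (hm w mw) (hR' w mw) (hm w' mw') (hR' w' mw') ?_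
    rw [← hw', ← hw]

/-- For `k ≥ 1`, `k + 2l ≥ 3`, the action map `Φ : SL(2,ℝ) × Ω → Ω × Ω`,
`Φ(A, (x, w)) = (A • (x, w), (x, w))`, of the diagonal Möbius action of `SL(2,ℝ)` on the
space `Ω` of configurations of `k` pairwise distinct boundary points and `l` pairwise
distinct interior points of the upper half-plane is proper: preimages of compact sets are
compact. -/
theorem sl2R_mobius_action_proper
    (k l : ℕ) (hk : 1 ≤ k) (hkl : 3 ≤ k + 2 * l)
    (Φ : Matrix.SpecialLinearGroup (Fin 2) ℝ × configSpace k l →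
      ((Fin k → OnePoint ℂ) × (Fin l → OnePoint ℂ)) ×
        ((Fin k → OnePoint ℂ) × (Fin l → OnePoint ℂ)))
    (hΦ : ∀ p : Matrix.SpecialLinearGroup (Fin 2) ℝ × configSpace k l,
      Φ p = ((fun i => mobius (toC p.1) ((p.2 : (Fin k → OnePoint ℂ) × (Fin l → OnePoint ℂ)).1 i),
              fun j => mobius (toC p.1) ((p.2 : (Fin k → OnePoint ℂ) × (Fin l → OnePoint ℂ)).2 j)),
             (p.2 : (Fin k → OnePoint ℂ) × (Fin l → OnePoint ℂ)))) :
    ∀ K : Set (((Fin k → OnePoint ℂ) × (Fin l → OnePoint ℂ)) ×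
        ((Fin k → OnePoint ℂ) × (Fin l → OnePoint ℂ))), IsCompact K →
      K ⊆ (configSpace k l) ×ˢ (configSpace k l) → IsCompact (Φ ⁻¹' K) := by
  intro K hK hsub
  have hΦc : Continuous Φ := by
    have : Φ = fun p => _ := funext hΦ
    rw [this]
    refine Continuous.prodMk (Continuous.prodMk ?_ ?_) (continuous_subtype_val.comp continuous_snd)
    · refine continuous_pi fun i => continuous_mobius.comp (continuous_fst.prodMk ?_)
      exact (continuous_apply i).comp
        (continuous_fst.comp (continuous_subtype_val.comp continuous_snd))
    · refine continuous_pi fun i => continuous_mobius.comp (continuous_fst.prodMk ?_)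
      exact (continuous_apply i).comp
        (continuous_snd.comp (continuous_subtype_val.comp continuous_snd))
  have hcl : IsClosed (Φ ⁻¹' K) := hK.isClosed.preimage hΦc
  have hK1 : IsCompact (Prod.fst '' K) := hK.image continuous_fst
  have hK2 : IsCompact (Prod.snd '' K) := hK.image continuous_snd
  have s2 : Prod.snd '' K ⊆ configSpace k l := by
    rintro _ ⟨x, hx, rfl⟩
    exact (hsub hx).2
  have s1 : Prod.fst '' K ⊆ configSpace k l := by
    rintro _ ⟨x, hx, rfl⟩
    exact (hsub hx).1
  obtain ⟨C, hC⟩ := exists_bound k l hk hkl _ (hK1.union hK2) (Set.union_subset s1 s2)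
  have hQ : IsCompact ((Subtype.val : configSpace k l → _) ⁻¹' (Prod.snd '' K)) := by
    refine Topology.IsInducing.subtypeVal.isCompact_preimage' hK2 ?_
    rw [Subtype.range_coe]
    exact s2
  refine IsCompact.of_isClosed_subset ((isCompact_bounded C).prod hQ) hcl ?_
  rintro ⟨A, x⟩ hx
  have h1 : (Φ (A, x)).1 ∈ Prod.fst '' K := ⟨_, hx, rfl⟩
  have h2 : (Φ (A, x)).2 ∈ Prod.snd '' K := ⟨_, hx, rfl⟩
  rw [hΦ] at h1 h2
  exact ⟨hC A x.1 (Or.inr h2) (Or.inl h1), h2⟩
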